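/- arXiv:0706.1092 — 2 statements merged into one kernel-verified Lean document; each statement's English description precedes it below -/
import Mathlib

section
/- Let A and B be finite subsets of a commutative semigroup (G,+). Then there exist a constant c > 0 and a polynomial p such that for all integers n > c, the cardinality |n*A + B| equals p(n). -/
open Pointwise

/-- The `n`-fold sumset `n*A = {a₁+⋯+a_n : aᵢ ∈ A}` in a (commutative) semigroup,
defined for `n ≥ 1` (the value at `n = 0` is an irrelevant junk value `∅`). -/
def nmulSet {G : Type*} [Add G] (A : Set G) : ℕ → Set G
  | 0 => ∅
  | 1 => A
  | n + 2 => nmulSet A (n + 1) + A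

/-!
Fix enumerations `a` of `A` and `b` of `B`. An element of `n*A + B` is a value
`∑ i, x i • a i + b j` with `x ∈ ℕ^ι` of degree `n`, so `|n*A + B|` counts the pairs `(x, j)` that
are least in their fibre for a translation-invariant linear order. For fixed `j`, the `x` that fail
to be least form an upper set of `ℕ^ι`. By Dickson's lemma this upper set is generated by finitely
many vectors, and inclusion–exclusion expresses its number of degree `n` elements through the
numbers of degree `n` elements above a given vector, which are binomial coefficients and so
polynomial for large `n` (Nathanson and Ruzsa).
-/

open Finset Polynomial

/-- The sequences that agree with a polynomial function from some index on. -/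
def eventuallyPolynomial (R : Type*) [CommSemiring R] : Submodule R (ℕ → R) where
  carrier := {f | ∃ p : R[X], ∀ᶠ n in Filter.atTop, f n = p.eval (n : R)}
  zero_mem' := ⟨0, by simp⟩
  add_mem' := by
    rintro f g ⟨p, hp⟩ ⟨q, hq⟩
    refine ⟨p + q, ?_⟩
    filter_upwards [hp, hq] with n hpn hqn
    simp [hpn, hqn]
  smul_mem' := by
    rintro r f ⟨p, hp⟩
    refine ⟨r • p, ?_⟩
    filter_upwards [hp] with n hpn
    simp [hpn]

theorem mem_eventuallyPolynomial_of_eventuallyEq {R : Type*} [CommSemiring R] {f g : ℕ → R}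
    (hg : g ∈ eventuallyPolynomial R) (hfg : f =ᶠ[Filter.atTop] g) :
    f ∈ eventuallyPolynomial R := by
  obtain ⟨p, hp⟩ := hg
  exact ⟨p, hfg.trans hp⟩

theorem multichoose_sub_mem_eventuallyPolynomial (F : Type*) [Field F] [CharZero F] (k d : ℕ) :
    (fun n ↦ (k.multichoose (n - d) : F)) ∈ eventuallyPolynomial F := by
  cases k with
  | zero =>
    refine mem_eventuallyPolynomial_of_eventuallyEq (zero_mem _) ?_
    filter_upwards [Filter.eventually_gt_atTop d] with n hn
    obtain ⟨m, hm⟩ := Nat.exists_eq_succ_of_ne_zero (Nat.sub_ne_zero_of_lt hn)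
    simp [hm]
  | succ k =>
    refine ⟨preHilbertPoly F k d, ?_⟩
    filter_upwards [Filter.eventually_ge_atTop d] with n hn
    rw [preHilbertPoly_eq_choose_sub_add F k hn, Nat.multichoose_eq,
      Nat.choose_symm_of_eq_add (by omega : k + 1 + (n - d) - 1 = n - d + k)]
    congr 2
    omega

theorem exists_finset_eq_biUnion_Ici {α : Type*} [PartialOrder α] [WellQuasiOrderedLE α]
    {U : Set α} (hU : IsUpperSet U) : ∃ s : Finset α, U = ⋃ m ∈ s, Set.Ici m := by
  have hfin : {m | Minimal (· ∈ U) m}.Finite :=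
    WellQuasiOrderedLE.finite_of_isAntichain (setOfPred_minimal_antichain _)
  refine ⟨hfin.toFinset, Set.Subset.antisymm (fun x hx ↦ ?_) ?_⟩
  · obtain ⟨m, hmx, hm⟩ := exists_minimal_le_of_wellFoundedLT (· ∈ U) x hx
    exact Set.mem_biUnion (hfin.mem_toFinset.2 hm) hmx
  · exact Set.iUnion₂_subset fun m hm ↦ hU.Ici_subset (hfin.mem_toFinset.1 hm).prop

theorem card_image_eq_card_filter_forall_le {α β γ : Type*} [DecidableEq β] [LinearOrder γ]
    {r : α → γ} (hr : Function.Injective r) (s : Finset α) (f : α → β)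
    [DecidablePred fun x ↦ ∀ y ∈ s, f y = f x → r x ≤ r y] :
    #(s.image f) = #{x ∈ s | ∀ y ∈ s, f y = f x → r x ≤ r y} := by
  symm
  refine card_nbij f ?_ ?_ ?_
  · intro x hx
    exact mem_image_of_mem f (mem_filter.1 hx).1
  · intro x hx y hy hxy
    obtain ⟨hxs, hx⟩ := mem_filter.1 hx
    obtain ⟨hys, hy⟩ := mem_filter.1 hy
    exact hr (le_antisymm (hx y hys hxy.symm) (hy x hxs hxy))
  · intro z hz
    obtain ⟨x₀, hx₀, hfx₀⟩ := mem_image.1 hz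
    obtain ⟨x, hx, hmin⟩ := exists_min_image {x ∈ s | f x = z} r ⟨x₀, mem_filter.2 ⟨hx₀, hfx₀⟩⟩
    obtain ⟨hxs, rfl⟩ := mem_filter.1 hx
    exact ⟨x, mem_filter.2 ⟨hxs, fun y hy hyx ↦ hmin y (mem_filter.2 ⟨hy, hyx⟩)⟩, rfl⟩

section HilbertFunction

variable {ι : Type*} [Fintype ι]

/-- The Hilbert function of a set `S` of exponent vectors: the number of elements of `S` of a given
degree, the degree of `x` being `∑ i, x i`. -/
noncomputable def hilbertFunction (S : Set (ι → ℕ)) (n : ℕ) : ℕ :=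
  {x ∈ S | ∑ i, x i = n}.ncard

theorem hilbertFunction_eq_card [DecidableEq ι] (S : Set (ι → ℕ)) [DecidablePred (· ∈ S)] (n : ℕ) :
    hilbertFunction S n = #{x ∈ piAntidiag univ n | x ∈ S} := by
  rw [hilbertFunction, ← Set.ncard_coe_finset]
  congr 1
  ext x
  simp [and_comm]

theorem hilbertFunction_univ (n : ℕ) :
    hilbertFunction (Set.univ : Set (ι → ℕ)) n = (Fintype.card ι).multichoose n := by
  classical
  rw [hilbertFunction_eq_card, filter_true_of_mem fun x _ ↦ Set.mem_univ x, ← map_sym_eq_piAntidiag,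
    card_map, sym_univ, card_univ, Sym.card_sym_eq_multichoose]

theorem hilbertFunction_Ici (d : ι → ℕ) {n : ℕ} (hn : ∑ i, d i ≤ n) :
    hilbertFunction (Set.Ici d) n = (Fintype.card ι).multichoose (n - ∑ i, d i) := by
  symm
  rw [← hilbertFunction_univ, hilbertFunction, hilbertFunction,
    ← Set.ncard_image_of_injective _ (add_left_injective d)]
  congr 1
  ext x
  constructor
  · rintro ⟨y, ⟨-, hy⟩, rfl⟩
    refine ⟨Set.mem_Ici.2 le_add_self, ?_⟩
    simp only [Pi.add_apply, sum_add_distrib]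
    omega
  · rintro ⟨hdx, hx⟩
    obtain ⟨y, rfl⟩ := exists_add_of_le (Set.mem_Ici.1 hdx)
    simp only [Pi.add_apply, sum_add_distrib] at hx
    exact ⟨y, ⟨Set.mem_univ y, by omega⟩, add_comm y d⟩

theorem hilbertFunction_add_compl (S : Set (ι → ℕ)) (n : ℕ) :
    hilbertFunction S n + hilbertFunction Sᶜ n = hilbertFunction (Set.univ : Set (ι → ℕ)) n := by
  classical
  simpa [hilbertFunction_eq_card] using
    card_filter_add_card_filter_not (s := piAntidiag (univ : Finset ι) n) (· ∈ S)

theorem hilbertFunction_biUnion_Ici (s : Finset (ι → ℕ)) (n : ℕ) :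
    (hilbertFunction (⋃ m ∈ s, Set.Ici m) n : ℤ) =
      ∑ t : s.powerset.filter (·.Nonempty),
        (-1 : ℤ) ^ (#t.1 + 1) * hilbertFunction (Set.Ici (t.1.sup id)) n := by
  classical
  let vectorsAbove (m : ι → ℕ) : Finset (ι → ℕ) := {x ∈ piAntidiag univ n | m ≤ x}
  have hcard (m : ι → ℕ) : hilbertFunction (Set.Ici m) n = #(vectorsAbove m) :=
    hilbertFunction_eq_card _ n
  have hunion : hilbertFunction (⋃ m ∈ s, Set.Ici m) n = #(s.biUnion vectorsAbove) := by
    rw [hilbertFunction_eq_card]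
    congr 1
    ext x
    simp [vectorsAbove, ← exists_and_left, and_left_comm]
  have hinter (t : s.powerset.filter (·.Nonempty)) :
      t.1.inf' (mem_filter.1 t.2).2 vectorsAbove = vectorsAbove (t.1.sup id) := by
    ext x
    simp only [vectorsAbove, mem_inf', mem_filter, Finset.sup_le_iff, id]
    obtain ⟨m, hm⟩ := (mem_filter.1 t.2).2
    exact ⟨fun h ↦ ⟨(h m hm).1, fun i hi ↦ (h i hi).2⟩, fun h i hi ↦ ⟨h.1, h.2 i hi⟩⟩
  simp only [hunion, inclusion_exclusion_card_biUnion, hinter, hcard]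

variable (F : Type*) [Field F] [CharZero F]

theorem hilbertFunction_Ici_mem_eventuallyPolynomial (d : ι → ℕ) :
    (fun n ↦ (hilbertFunction (Set.Ici d) n : F)) ∈ eventuallyPolynomial F := by
  refine mem_eventuallyPolynomial_of_eventuallyEq
    (multichoose_sub_mem_eventuallyPolynomial F (Fintype.card ι) (∑ i, d i)) ?_
  filter_upwards [Filter.eventually_ge_atTop (∑ i, d i)] with n hn
  rw [hilbertFunction_Ici d hn]

variable {U : Set (ι → ℕ)}

theorem hilbertFunction_mem_eventuallyPolynomial (hU : IsUpperSet U) :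
    (fun n ↦ (hilbertFunction U n : F)) ∈ eventuallyPolynomial F := by
  obtain ⟨s, rfl⟩ := exists_finset_eq_biUnion_Ici hU
  have inclusion_exclusion : (fun n ↦ (hilbertFunction (⋃ m ∈ s, Set.Ici m) n : F)) =
      ∑ t : s.powerset.filter (·.Nonempty),
        (-1 : F) ^ (#t.1 + 1) • fun n ↦ (hilbertFunction (Set.Ici (t.1.sup id)) n : F) := by
    ext n
    simpa using congrArg (Int.cast : ℤ → F) (hilbertFunction_biUnion_Ici s n)
  rw [inclusion_exclusion]
  exact sum_mem fun t _ ↦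
    Submodule.smul_mem _ _ (hilbertFunction_Ici_mem_eventuallyPolynomial F _)

theorem hilbertFunction_compl_mem_eventuallyPolynomial (hU : IsUpperSet U) :
    (fun n ↦ (hilbertFunction Uᶜ n : F)) ∈ eventuallyPolynomial F := by
  have hcompl : (fun n ↦ (hilbertFunction Uᶜ n : F)) =
      (fun n ↦ (hilbertFunction (Set.univ : Set (ι → ℕ)) n : F)) -
        fun n ↦ (hilbertFunction U n : F) := by
    ext n
    rw [Pi.sub_apply, eq_sub_iff_add_eq']
    exact_mod_cast hilbertFunction_add_compl U n
  rw [hcompl]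
  exact sub_mem (hilbertFunction_mem_eventuallyPolynomial F isUpperSet_univ)
    (hilbertFunction_mem_eventuallyPolynomial F hU)

end HilbertFunction

section Useless

variable {ι κ M : Type*} [Fintype ι] [LinearOrder ι] [LinearOrder κ] [AddCommMonoid M]

/-- The exponent vectors `x` that are useless for counting the values `φ x + b j`, in the
terminology of Nathanson and Ruzsa: the same value is attained in the same degree at a pair `(y, i)`
that precedes `(x, j)` in the lexicographic order. -/
def uselessVectors (φ : (ι → ℕ) →+ M) (b : κ → M) (j : κ) : Set (ι → ℕ) :=
  {x | ∃ (y : ι → ℕ) (i : κ), ∑ l, y l = ∑ l, x l ∧ φ y + b i = φ x + b j ∧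
    toLex (toLex y, i) < toLex (toLex x, j)}

theorem isUpperSet_uselessVectors (φ : (ι → ℕ) →+ M) (b : κ → M) (j : κ) :
    IsUpperSet (uselessVectors φ b j) := by
  rintro x x' hxx' ⟨y, i, hdeg, hval, hlt⟩
  obtain ⟨z, rfl⟩ := exists_add_of_le hxx'
  refine ⟨y + z, i, ?_, ?_, ?_⟩
  · simp only [Pi.add_apply, sum_add_distrib, hdeg]
  · rw [map_add, map_add, add_right_comm, hval, add_right_comm]
  · simpa [Prod.Lex.toLex_lt_toLex, toLex_add] using hlt

theorem ncard_image_add_range_eq_sum_hilbertFunction [Fintype κ] (φ : (ι → ℕ) →+ M) (b : κ → M)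
    (n : ℕ) :
    (φ '' {x | ∑ i, x i = n} + Set.range b).ncard =
      ∑ j, hilbertFunction (uselessVectors φ b j)ᶜ n := by
  classical
  let pairs : Finset ((ι → ℕ) × κ) := piAntidiag univ n ×ˢ univ
  let value (p : (ι → ℕ) × κ) : M := φ p.1 + b p.2
  let rank (p : (ι → ℕ) × κ) : Lex (ι → ℕ) ×ₗ κ := toLex (toLex p.1, p.2)
  have rank_injective : Function.Injective rank := by
    rintro ⟨x, j⟩ ⟨y, i⟩ h
    simpa [rank] using h
  have himage : φ '' {x | ∑ i, x i = n} + Set.range b = pairs.image value := by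
    ext y
    simp [Set.mem_add, pairs, value]
  rw [himage, Set.ncard_coe_finset, card_image_eq_card_filter_forall_le rank_injective, card_filter,
    sum_product_right]
  refine sum_congr rfl fun j _ ↦ ?_
  rw [hilbertFunction_eq_card, card_filter]
  refine sum_congr rfl fun x hx ↦ if_congr ?_ rfl rfl
  have hx : ∑ l, x l = n := by simpa using hx
  simp only [uselessVectors, pairs, value, rank, mem_product, mem_piAntidiag, mem_univ, ne_eq,
    implies_true, and_true, Prod.forall, exists_and_left, Set.mem_compl_iff, Set.mem_ofPred_eq, hx,
    not_exists, not_and, not_lt]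
  exact ⟨fun h y hy i ↦ h y i hy, fun h y i hy ↦ h y hy i⟩

theorem ncard_image_add_range_mem_eventuallyPolynomial (F : Type*) [Field F] [CharZero F]
    [Finite κ] (φ : (ι → ℕ) →+ M) (b : κ → M) :
    (fun n ↦ ((φ '' {x | ∑ i, x i = n} + Set.range b).ncard : F)) ∈ eventuallyPolynomial F := by
  have := Fintype.ofFinite κ
  have hsum : (fun n ↦ ((φ '' {x | ∑ i, x i = n} + Set.range b).ncard : F)) =
      ∑ j, fun n ↦ (hilbertFunction (uselessVectors φ b j)ᶜ n : F) := by
    ext n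
    simp [ncard_image_add_range_eq_sum_hilbertFunction]
  rw [hsum]
  exact sum_mem fun j _ ↦
    hilbertFunction_compl_mem_eventuallyPolynomial F (isUpperSet_uselessVectors φ b j)

end Useless

theorem image_nmulSet {F G H : Type*} [Add G] [Add H] [FunLike F G H] [AddHomClass F G H]
    (f : F) (A : Set G) (n : ℕ) :
    f '' nmulSet A n = nmulSet (f '' A) n := by
  induction n using nmulSet.induct with
  | case1 => exact Set.image_empty f
  | case2 => rfl
  | case3 n ih => rw [nmulSet, nmulSet, Set.image_add, ih]

section NmulSetRange

variable {ι : Type*} [Fintype ι]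

theorem setOf_sum_eq_succ [DecidableEq ι] (n : ℕ) :
    {x : ι → ℕ | ∑ i, x i = n + 1} =
      {x | ∑ i, x i = n} + Set.range fun i ↦ Pi.single i 1 := by
  ext x
  constructor
  · intro hx
    obtain ⟨i, -, hi⟩ := exists_ne_zero_of_sum_ne_zero (hx.trans_ne n.succ_ne_zero)
    have hle : Pi.single i 1 ≤ x := by
      intro j
      obtain rfl | hj := eq_or_ne j i
      · simpa [Nat.one_le_iff_ne_zero] using hi
      · simp [hj]
    obtain ⟨y, rfl⟩ := exists_add_of_le hle
    exact ⟨y, by simpa [sum_add_distrib, add_comm 1] using hx, _, ⟨i, rfl⟩, add_comm _ _⟩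
  · rintro ⟨y, hy, _, ⟨i, rfl⟩, rfl⟩
    simpa [sum_add_distrib] using hy

theorem nmulSet_range_single [DecidableEq ι] {n : ℕ} (hn : n ≠ 0) :
    nmulSet (Set.range fun i : ι ↦ (Pi.single i 1 : ι → ℕ)) n = {x | ∑ i, x i = n} := by
  induction n using nmulSet.induct with
  | case1 => exact absurd rfl hn
  | case2 =>
    have hzero : {x : ι → ℕ | ∑ i, x i = 0} = 0 := by
      ext x
      simp [funext_iff]
    rw [nmulSet, ← zero_add 1, setOf_sum_eq_succ, hzero, zero_add, zero_add]
  | case3 n ih => rw [nmulSet, ih n.succ_ne_zero, setOf_sum_eq_succ (n + 1)]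

theorem nmulSet_range {M : Type*} [AddCommMonoid M] (a : ι → M) {n : ℕ} (hn : n ≠ 0) :
    nmulSet (Set.range a) n = Fintype.linearCombination ℕ a '' {x | ∑ i, x i = n} := by
  classical
  rw [← nmulSet_range_single hn, image_nmulSet, ← Set.range_comp]
  congr! 2
  ext i
  simp

end NmulSetRange

theorem card_affine_sumset_eventually_polynomial_general (F : Type*) [Field F] [CharZero F]
    {G : Type*} [AddCommSemigroup G] (A B : Set G) (hA : A.Finite) (hB : B.Finite) :
    ∃ c : ℕ, 0 < c ∧ ∃ p : F[X], ∀ n : ℕ, c < n →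
      ((nmulSet A n + B).ncard : F) = p.eval (n : F) := by
  obtain ⟨k, a, -, rfl⟩ := hA.fin_param
  obtain ⟨m, b, -, rfl⟩ := hB.fin_param
  let φ : (Fin k → ℕ) →+ WithZero G := Fintype.linearCombination ℕ fun i ↦ (a i : WithZero G)
  obtain ⟨p, hp⟩ := ncard_image_add_range_mem_eventuallyPolynomial F φ fun j ↦ (b j : WithZero G)
  obtain ⟨c, hc⟩ := Filter.eventually_atTop.1 hp
  refine ⟨c + 1, c.succ_pos, p, fun n hn ↦ ?_⟩
  have coe_injective : Function.Injective (WithZero.coeAddHom : G →ₙ+ WithZero G) :=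
    WithZero.coe_injective
  have hcoe : WithZero.coeAddHom '' (nmulSet (Set.range a) n + Set.range b) =
      φ '' {x | ∑ i, x i = n} + Set.range fun j ↦ (b j : WithZero G) := by
    rw [Set.image_add, image_nmulSet, ← Set.range_comp, ← Set.range_comp,
      nmulSet_range _ (by omega)]
    rfl
  rw [← Set.ncard_image_of_injective _ coe_injective, hcoe]
  exact hc n (by omega)

/-- Khovanskiĭ. Let `A` and `B` be finite subsets of a commutative
semigroup `(G,+)`. Then there exist a constant `c > 0` and a polynomial `p` such that
for all integers `n > c`, the cardinality `|n*A + B|` equals `p(n)`. -/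
theorem card_affine_sumset_eventually_polynomial
    {G : Type*} [AddCommSemigroup G] (A B : Set G) (hA : A.Finite) (hB : B.Finite) :
    ∃ c : ℕ, 0 < c ∧ ∃ p : Polynomial ℝ, ∀ n : ℕ, c < n →
      ((nmulSet A n + B).ncard : ℝ) = p.eval (n : ℝ) :=
  card_affine_sumset_eventually_polynomial_general ℝ A B hA hB
end

section
/- Let P be a polytope in ℝ^k whose vertices lie in ℤ^k. Then there exist a constant N and a polynomial p such that for all integers n ≥ N, the number of lattice points i(P,n) = |nP ∩ ℤ^k| equals p(n). -/
open Pointwise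

open Filter Polynomial Set

/-!
Place `n • P` at height `n` of the group `ℤ^k × ℤ`: the lattice points of all dilations form the
lattice points `D` of a cone whose generators `(v, 1)`, `v ∈ V`, are lattice points. Splitting off
the integral parts of conical coefficients leaves finitely many remainders, so by Dickson's lemma
`D` is well-quasi-ordered under translation by sums of generators.

The count is then done as in the Hilbert–Serre theorem. Translation by a generator `v` maps height
`n` injectively to height `n + 1`, and the points of `D` which it carries out of `D`, or which it
does not reach from `D`, form two convex sets on which `v` acts as zero. Hence the first difference
of the counting function is controlled by sets with fewer acting generators. When no generator
acts, the set is an antichain, hence finite.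
-/

section EventuallyPolynomial

variable {R : Type*} [CommRing R]

/-- A sequence in a commutative ring is eventually polynomial if its values at all large `n` are
those of a fixed polynomial. -/
def EventuallyPolynomial (f : ℕ → R) : Prop :=
  ∃ p : R[X], ∀ᶠ n : ℕ in atTop, f n = p.eval (n : R)

namespace EventuallyPolynomial

variable {f g : ℕ → R}

lemma of_eventually_eq_zero (hf : ∀ᶠ n in atTop, f n = 0) : EventuallyPolynomial f :=
  ⟨0, by simpa only [eval_zero] using hf⟩

lemma sub (hf : EventuallyPolynomial f) (hg : EventuallyPolynomial g) :
    EventuallyPolynomial fun n ↦ f n - g n := by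
  obtain ⟨p, hp⟩ := hf
  obtain ⟨q, hq⟩ := hg
  refine ⟨p - q, ?_⟩
  filter_upwards [hp, hq] with n hpn hqn
  rw [hpn, hqn, eval_sub]

lemma comp_add_one (hf : EventuallyPolynomial f) : EventuallyPolynomial fun n ↦ f (n + 1) := by
  obtain ⟨p, hp⟩ := hf
  refine ⟨p.comp (X + 1), ?_⟩
  filter_upwards [(tendsto_add_atTop_nat 1).eventually hp] with n hpn
  simpa only [eval_comp, eval_add, eval_X, eval_one, Nat.cast_add, Nat.cast_one] using hpn

end EventuallyPolynomial

variable [Algebra ℚ R]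

lemma exists_polynomial_eval_add_one_sub (p : R[X]) :
    ∃ q : R[X], ∀ x, q.eval (x + 1) - q.eval x = p.eval x := by
  induction p using Polynomial.induction_on' with
  | add p₁ p₂ h₁ h₂ =>
    obtain ⟨q₁, hq₁⟩ := h₁
    obtain ⟨q₂, hq₂⟩ := h₂
    exact ⟨q₁ + q₂, fun x ↦ by simp only [eval_add, ← hq₁, ← hq₂]; ring⟩
  | monomial d a =>
    -- Bernoulli polynomials satisfy `B (x + 1) - B x = (d + 1) * x ^ d` in degree `d + 1`.
    have bernoulli_sub (x : R) : aeval (x + 1) (Polynomial.bernoulli (d + 1)) -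
        aeval x (Polynomial.bernoulli (d + 1)) = (d + 1) * x ^ d := by
      have h := congrArg (aeval x) (bernoulli_comp_one_add_X (d + 1))
      simp only [aeval_comp, map_add, map_one, aeval_X, map_nsmul, map_pow,
        Nat.add_sub_cancel] at h
      rw [add_comm x 1, h, add_sub_cancel_left, nsmul_eq_mul]
      push_cast
      rfl
    have inv_mul : algebraMap ℚ R (d + 1 : ℚ)⁻¹ * (d + 1) = 1 := by
      have h : (d + 1 : R) = algebraMap ℚ R (d + 1) := by simp only [map_add, map_natCast, map_one]
      rw [h, ← map_mul, inv_mul_cancel₀ d.cast_add_one_ne_zero, map_one]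
    refine ⟨C (a * algebraMap ℚ R (d + 1 : ℚ)⁻¹) *
      (Polynomial.bernoulli (d + 1)).map (algebraMap ℚ R), fun x ↦ ?_⟩
    simp only [eval_mul, eval_C, eval_map_algebraMap, eval_monomial]
    rw [← mul_sub, bernoulli_sub]
    linear_combination (a * x ^ d) * inv_mul

lemma EventuallyPolynomial.of_add_one_sub {f : ℕ → R}
    (hf : EventuallyPolynomial fun n ↦ f (n + 1) - f n) : EventuallyPolynomial f := by
  obtain ⟨p, hp⟩ := hf
  obtain ⟨q, hq⟩ := exists_polynomial_eval_add_one_sub p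
  obtain ⟨N, hN⟩ := eventually_atTop.1 hp
  refine ⟨q + C (f N - q.eval (N : R)), eventually_atTop.2 ⟨N, fun n hn ↦ ?_⟩⟩
  rw [eval_add, eval_C]
  induction n, hn using Nat.le_induction with
  | base => ring
  | succ n hn ih =>
    have hfn : f (n + 1) - f n = p.eval (n : R) := hN n hn
    push_cast
    linear_combination hfn + ih - hq n

end EventuallyPolynomial

section SubmonoidOrder

variable {G : Type*} [AddCommGroup G]

/-- The preorder on a group whose nonnegative elements are those of the submonoid `S`. It is kept
as a relation since `G` may carry an order of its own. -/
def SubmonoidLE (S : AddSubmonoid G) (a b : G) : Prop := b - a ∈ S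

/-- Order-convexity of a set for the preorder `SubmonoidLE S`. -/
def SubmonoidConvex (S : AddSubmonoid G) (D : Set G) : Prop :=
  ∀ ⦃a⦄, a ∈ D → ∀ ⦃c⦄, c ∈ D → ∀ ⦃b⦄, SubmonoidLE S a b → SubmonoidLE S b c → b ∈ D

/-- The points of `D` carried out of `D` by translation by `v`. For translation acting on `D` as
a partial map, this is the kernel of `v`, and `exitSet D (-v)` is its cokernel. -/
def exitSet (D : Set G) (v : G) : Set G := {a ∈ D | a + v ∉ D}

/-- The part of degree `n` of a set in a group graded by `deg`. -/
def degreePart (deg : G →+ ℤ) (D : Set G) (n : ℤ) : Set G := {a ∈ D | deg a = n}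

variable {S : AddSubmonoid G} {D : Set G} {v : G}

lemma SubmonoidConvex.of_le {C : AddSubmonoid G} (hSC : S ≤ C) :
    SubmonoidConvex S (C : Set G) := by
  intro a ha c _ b hab _
  rw [← add_sub_cancel a b]
  exact C.add_mem ha (hSC hab)

lemma submonoidConvex_exitSet (hD : SubmonoidConvex S D) (hv : v ∈ S) :
    SubmonoidConvex S (exitSet D v) := by
  intro a ha c hc b hab hbc
  refine ⟨hD ha.1 hc.1 hab hbc, fun hbv ↦ ha.2 (hD ha.1 hbv ?_ ?_)⟩
  · simpa only [SubmonoidLE, add_sub_cancel_left] using hv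
  · simpa only [SubmonoidLE, add_sub_add_right_eq_sub] using hab

lemma submonoidConvex_exitSet_neg (hD : SubmonoidConvex S D) (hv : v ∈ S) :
    SubmonoidConvex S (exitSet D (-v)) := by
  intro a ha c hc b hab hbc
  refine ⟨hD ha.1 hc.1 hab hbc, fun hbv ↦ hc.2 (hD hbv hc.1 ?_ ?_)⟩
  · simpa only [SubmonoidLE, add_sub_add_right_eq_sub] using hbc
  · simpa only [SubmonoidLE, sub_add_cancel_left, neg_neg, sub_add_eq_sub_sub, sub_self, zero_sub]
      using hv

lemma add_notMem_exitSet_neg {a : G} (ha : a ∈ D) : a + v ∉ exitSet D (-v) :=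
  fun h ↦ h.2 (by rwa [add_neg_cancel_right])

lemma ncard_degreePart_add_ncard_exitSet {deg : G →+ ℤ} (hv : deg v = 1)
    (hfin : ∀ n, (degreePart deg D n).Finite) (n : ℤ) :
    (degreePart deg D (n + 1)).ncard + (degreePart deg (exitSet D v) n).ncard =
      (degreePart deg D n).ncard + (degreePart deg (exitSet D (-v)) (n + 1)).ncard := by
  have split (u : G) (m : ℤ) :
      (degreePart deg D m ∩ {a | a + u ∈ D}).ncard + (degreePart deg (exitSet D u) m).ncard =
        (degreePart deg D m).ncard := by
    rw [← Set.ncard_inter_add_ncard_sdiff_eq_ncard (degreePart deg D m) {a | a + u ∈ D} (hfin m)]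
    congr 2
    ext a
    simp only [degreePart, exitSet, Set.mem_sdiff, mem_ofPred_eq]
    tauto
  have translate : (degreePart deg D n ∩ {a | a + v ∈ D}).ncard =
      (degreePart deg D (n + 1) ∩ {a | a + -v ∈ D}).ncard := by
    rw [← ncard_image_of_injective _ (add_left_injective v)]
    congr 1
    ext b
    simp only [degreePart, image_add_right, mem_preimage, mem_inter_iff, mem_ofPred_eq, map_add,
      map_neg, hv, neg_add_cancel_right, add_neg_eq_iff_eq_add]
    tauto
  have hn := split v n
  have hn_succ := split (-v) (n + 1)
  omega

section Generators

variable {ι : Type*} {v : ι → G} {deg : G →+ ℤ}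

lemma eq_zero_or_exists_sub_mem_closure_range {c : G}
    (hc : c ∈ AddSubmonoid.closure (range v)) :
    c = 0 ∨ ∃ i, c - v i ∈ AddSubmonoid.closure (range v) := by
  induction hc using AddSubmonoid.closure_induction_left with
  | zero => exact .inl rfl
  | add_left _ hx y hy _ =>
    obtain ⟨i, rfl⟩ := hx
    exact .inr ⟨i, by rwa [add_sub_cancel_left]⟩

lemma nonneg_of_mem_closure_range (hdeg : ∀ i, 0 ≤ deg (v i)) {c : G}
    (hc : c ∈ AddSubmonoid.closure (range v)) : 0 ≤ deg c := by
  have hle : AddSubmonoid.closure (range v) ≤ (AddSubmonoid.nonneg ℤ).comap deg :=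
    AddSubmonoid.closure_le.2 (range_subset_iff.2 hdeg)
  exact hle hc

lemma finite_degreePart (hdeg : ∀ i, 0 < deg (v i))
    (hD : D.PartiallyWellOrderedOn (SubmonoidLE (AddSubmonoid.closure (range v)))) (n : ℤ) :
    (degreePart deg D n).Finite := by
  refine IsAntichain.finite_of_partiallyWellOrderedOn ?_ (hD.mono (sep_subset _ _))
  intro a ha b hb hne hab
  obtain hzero | ⟨i, hi⟩ := eq_zero_or_exists_sub_mem_closure_range hab
  · exact hne (sub_eq_zero.1 hzero).symm
  · have hnonneg := nonneg_of_mem_closure_range (fun j ↦ (hdeg j).le) hi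
    rw [map_sub, map_sub, ha.2, hb.2] at hnonneg
    linarith [hdeg i]

lemma finite_of_forall_add_notMem
    (hconv : SubmonoidConvex (AddSubmonoid.closure (range v)) D)
    (hD : D.PartiallyWellOrderedOn (SubmonoidLE (AddSubmonoid.closure (range v))))
    (hexit : ∀ i, ∀ a ∈ D, a + v i ∉ D) : D.Finite := by
  refine IsAntichain.finite_of_partiallyWellOrderedOn ?_ hD
  intro a ha b hb hne hab
  obtain hzero | ⟨i, hi⟩ := eq_zero_or_exists_sub_mem_closure_range hab
  · exact hne (sub_eq_zero.1 hzero).symm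
  · refine hexit i a ha (hconv ha hb ?_ ?_)
    · rw [SubmonoidLE, add_sub_cancel_left]
      exact AddSubmonoid.subset_closure (mem_range_self i)
    · simpa only [SubmonoidLE, sub_add_eq_sub_sub] using hi

lemma eventually_degreePart_eq_empty (hD : D.Finite) (deg : G →+ ℤ) :
    ∀ᶠ n : ℕ in atTop, degreePart deg D n = ∅ := by
  obtain ⟨M, hM⟩ := (hD.image deg).bddAbove
  filter_upwards [eventually_gt_atTop M.toNat] with n hn
  refine eq_empty_of_forall_notMem fun a ha ↦ ?_
  have : (n : ℤ) ≤ M := ha.2 ▸ hM (mem_image_of_mem deg ha.1)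
  omega

variable {R : Type*} [CommRing R] [Algebra ℚ R]

/-- Only the generators in `t` may act nontrivially on `D`; the induction is on `t` so that the
preorder, given by all generators, stays fixed. -/
lemma SubmonoidConvex.eventuallyPolynomial_ncard_degreePart_of_forall_notMem
    (hdeg : ∀ i, deg (v i) = 1) (hconv : SubmonoidConvex (AddSubmonoid.closure (range v)) D)
    (hD : D.PartiallyWellOrderedOn (SubmonoidLE (AddSubmonoid.closure (range v))))
    (t : Finset ι) (hexit : ∀ i ∉ t, ∀ a ∈ D, a + v i ∉ D) :
    EventuallyPolynomial fun n : ℕ ↦ ((degreePart deg D n).ncard : R) := by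
  classical
  induction t using Finset.induction_on generalizing D with
  | empty =>
    apply EventuallyPolynomial.of_eventually_eq_zero
    have hfin := finite_of_forall_add_notMem hconv hD fun i ↦ hexit i (Finset.notMem_empty i)
    filter_upwards [eventually_degreePart_eq_empty hfin deg] with n hn
    rw [hn, ncard_empty, Nat.cast_zero]
  | insert i t _ ih =>
    have hi : v i ∈ AddSubmonoid.closure (range v) :=
      AddSubmonoid.subset_closure (mem_range_self i)
    have exit_of_subset {K : Set G} (hK : K ⊆ D) (hKi : ∀ a ∈ K, a + v i ∉ K) :
        ∀ j ∉ t, ∀ a ∈ K, a + v j ∉ K := by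
      intro j hj a ha haj
      obtain rfl | hji := eq_or_ne j i
      · exact hKi a ha haj
      · exact hexit j (by simp [hji, hj]) a (hK ha) (hK haj)
    have kernel := ih (submonoidConvex_exitSet hconv hi) (hD.mono (sep_subset _ _))
      (exit_of_subset (sep_subset _ _) fun a ha h ↦ ha.2 h.1)
    have cokernel := ih (submonoidConvex_exitSet_neg hconv hi) (hD.mono (sep_subset _ _))
      (exit_of_subset (sep_subset _ _) fun a ha ↦ add_notMem_exitSet_neg ha.1)
    apply EventuallyPolynomial.of_add_one_sub
    convert! cokernel.comp_add_one.sub kernel using 2 with n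
    have hcount := congrArg (Nat.cast (R := R)) (ncard_degreePart_add_ncard_exitSet (hdeg i)
      (finite_degreePart (fun j ↦ (hdeg j).symm ▸ zero_lt_one) hD) n)
    push_cast at hcount ⊢
    linear_combination hcount

theorem SubmonoidConvex.eventuallyPolynomial_ncard_degreePart [Finite ι]
    (hdeg : ∀ i, deg (v i) = 1) (hconv : SubmonoidConvex (AddSubmonoid.closure (range v)) D)
    (hD : D.PartiallyWellOrderedOn (SubmonoidLE (AddSubmonoid.closure (range v)))) :
    EventuallyPolynomial fun n : ℕ ↦ ((degreePart deg D n).ncard : R) := by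
  have := Fintype.ofFinite ι
  exact hconv.eventuallyPolynomial_ncard_degreePart_of_forall_notMem hdeg hD Finset.univ
    fun i hi ↦ absurd (Finset.mem_univ i) hi

end Generators

end SubmonoidOrder

section Cone

variable {G E : Type*} [AddCommGroup G] [AddCommGroup E] [Module ℝ E]

lemma exists_eq_add_sum_of_mem_hull {ι : Type*} [Fintype ι] {φ : G →+ E} {v : ι → G} {a : G}
    (ha : φ a ∈ PointedCone.hull ℝ (range (φ ∘ v))) :
    ∃ f, φ f ∈ parallelepiped (φ ∘ v) ∧ ∃ m : ι → ℕ, f + ∑ i, m i • v i = a := by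
  obtain ⟨c, hc⟩ := Submodule.mem_span_range_iff_exists_fun _ |>.1 ha
  refine ⟨a - ∑ i, ⌊(c i : ℝ)⌋₊ • v i, (mem_parallelepiped_iff _ _).2
    ⟨fun i ↦ (c i : ℝ) - ⌊(c i : ℝ)⌋₊, ⟨fun i ↦ ?_, fun i ↦ ?_⟩, ?_⟩, fun i ↦ ⌊(c i : ℝ)⌋₊,
    sub_add_cancel _ _⟩
  · exact sub_nonneg.2 (Nat.floor_le (c i).2)
  · exact sub_le_iff_le_add'.2 (Nat.lt_floor_add_one _).le
  · simp only [map_sub, map_sum, map_nsmul, ← hc, Function.comp_apply, sub_smul,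
      Nat.cast_smul_eq_nsmul, Finset.sum_sub_distrib]
    rfl

variable [TopologicalSpace E] [ContinuousAdd E] [ContinuousSMul ℝ E]

lemma isCompact_parallelepiped {ι : Type*} [Fintype ι] (v : ι → E) :
    IsCompact (parallelepiped v) :=
  isCompact_Icc.image (by fun_prop)

lemma partiallyWellOrderedOn_preimage_hull {ι : Type*} [Finite ι] {φ : G →+ E}
    (hφ : Tendsto φ cofinite (cocompact E)) (v : ι → G) :
    (φ ⁻¹' (PointedCone.hull ℝ (range (φ ∘ v)) : Set E)).PartiallyWellOrderedOn
      (SubmonoidLE (AddSubmonoid.closure (range v))) := by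
  have := Fintype.ofFinite ι
  have hfin : (φ ⁻¹' parallelepiped (φ ∘ v)).Finite := by
    have h := hφ (isCompact_parallelepiped (φ ∘ v)).compl_mem_cocompact
    rwa [mem_map, mem_cofinite, preimage_compl, compl_compl] at h
  have hDickson : (univ : Set (ι → ℕ)).PartiallyWellOrderedOn (· ≤ ·) :=
    partiallyWellOrderedOn_univ_iff.2 wellQuasiOrdered_le
  have hprod := (hfin.partiallyWellOrderedOn (r := Eq)).prod hDickson
  refine (hprod.image_of_monotone_on (f := fun x ↦ x.1 + ∑ i, x.2 i • v i) ?_).mono ?_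
  · rintro ⟨f, m⟩ - ⟨f', m'⟩ - ⟨rfl : f = f', hm : m ≤ m'⟩
    obtain ⟨k, rfl⟩ := exists_add_of_le hm
    simp only [SubmonoidLE, Pi.add_apply, add_smul, Finset.sum_add_distrib, add_sub_add_left_eq_sub,
      add_sub_cancel_left]
    exact sum_mem fun i _ ↦ nsmul_mem (AddSubmonoid.subset_closure (mem_range_self i)) _
  · intro a ha
    obtain ⟨f, hf, m, rfl⟩ := exists_eq_add_sum_of_mem_hull ha
    exact ⟨(f, m), ⟨hf, mem_univ m⟩, rfl⟩

theorem eventuallyPolynomial_ncard_degreePart_preimage_hull {R ι : Type*} [CommRing R]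
    [Algebra ℚ R] [Finite ι] {φ : G →+ E} (hφ : Tendsto φ cofinite (cocompact E)) {v : ι → G}
    {deg : G →+ ℤ} (hdeg : ∀ i, deg (v i) = 1) :
    EventuallyPolynomial fun n : ℕ ↦ ((degreePart deg
      (φ ⁻¹' (PointedCone.hull ℝ (range (φ ∘ v)) : Set E)) n).ncard : R) := by
  let D : AddSubmonoid G := (PointedCone.hull ℝ (range (φ ∘ v))).toAddSubmonoid.comap φ
  have hvD : AddSubmonoid.closure (range v) ≤ D :=
    AddSubmonoid.closure_le.2 (range_subset_iff.2 fun i ↦ PointedCone.subset_hull ⟨i, rfl⟩)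
  exact (SubmonoidConvex.of_le hvD).eventuallyPolynomial_ncard_degreePart hdeg
    (partiallyWellOrderedOn_preimage_hull hφ v)

end Cone

section Homogenization

variable {𝕜 E : Type*} [Field 𝕜] [LinearOrder 𝕜] [IsStrictOrderedRing 𝕜] [AddCommGroup E]
  [Module 𝕜 E] {s : Set E} {x : E} {c : 𝕜}

lemma eq_zero_or_mem_smul_convexHull_of_mem_hull {z : E × 𝕜}
    (hz : z ∈ PointedCone.hull 𝕜 ((·, (1 : 𝕜)) '' s)) :
    z = 0 ∨ 0 < z.2 ∧ z.1 ∈ z.2 • convexHull 𝕜 s := by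
  induction hz using Submodule.span_induction with
  | mem z hz =>
    obtain ⟨y, hy, rfl⟩ := hz
    exact .inr ⟨one_pos, by simpa only [one_smul] using subset_convexHull 𝕜 s hy⟩
  | zero => exact .inl rfl
  | add z w _ _ hz hw =>
    obtain rfl | ⟨hz₂, hz₁⟩ := hz
    · simpa only [zero_add] using hw
    obtain rfl | ⟨hw₂, hw₁⟩ := hw
    · simpa only [add_zero] using .inr ⟨hz₂, hz₁⟩
    refine .inr ⟨add_pos hz₂ hw₂, ?_⟩
    rw [Prod.snd_add, (convex_convexHull 𝕜 s).add_smul hz₂.le hw₂.le]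
    exact add_mem_add hz₁ hw₁
  | smul r z _ hz =>
    obtain rfl | ⟨hz₂, hz₁⟩ := hz
    · exact .inl (smul_zero r)
    obtain rfl | hr := eq_or_ne r 0
    · exact .inl (zero_smul _ z)
    · have hr_pos : (0 : 𝕜) < r := r.2.lt_of_ne' (Subtype.coe_ne_coe.2 hr)
      refine .inr ⟨mul_pos hr_pos hz₂, ?_⟩
      change (r : 𝕜) • z.1 ∈ ((r : 𝕜) * z.2) • convexHull 𝕜 s
      rw [mul_smul]
      exact smul_mem_smul_set hz₁

lemma prodMk_one_mem_hull_of_mem_convexHull (hx : x ∈ convexHull 𝕜 s) :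
    (x, (1 : 𝕜)) ∈ PointedCone.hull 𝕜 ((·, (1 : 𝕜)) '' s) := by
  let C := PointedCone.hull 𝕜 ((·, (1 : 𝕜)) '' s)
  refine convexHull_min (t := {y | (y, (1 : 𝕜)) ∈ C})
    (fun y hy ↦ PointedCone.subset_hull (mem_image_of_mem _ hy)) ?_ hx
  intro y hy z hz a b ha hb hab
  have hyz : a • (y, (1 : 𝕜)) + b • (z, (1 : 𝕜)) ∈ C :=
    C.add_mem (C.smul_mem ha hy) (C.smul_mem hb hz)
  rw [mem_ofPred_eq]
  simpa only [Prod.smul_mk, Prod.mk_add_mk, smul_eq_mul, mul_one, hab] using hyz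

lemma mem_hull_image_prodMk_one_iff (hc : 0 < c) :
    (x, c) ∈ PointedCone.hull 𝕜 ((·, (1 : 𝕜)) '' s) ↔ x ∈ c • convexHull 𝕜 s := by
  constructor
  · intro hx
    have hne : (x, c) ≠ 0 := fun h ↦ hc.ne' (congrArg Prod.snd h)
    exact ((eq_zero_or_mem_smul_convexHull_of_mem_hull hx).resolve_left hne).2
  · rintro ⟨y, hy, rfl⟩
    have hcy := PointedCone.smul_mem _ hc.le (prodMk_one_mem_hull_of_mem_convexHull hy)
    simpa only [Prod.smul_mk, smul_eq_mul, mul_one] using hcy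

end Homogenization

lemma ncard_degreePart_snd {Λ : Type*} [AddCommGroup Λ] (D : Set (Λ × ℤ)) (n : ℤ) :
    (degreePart (AddMonoidHom.snd Λ ℤ) D n).ncard = {a | (a, n) ∈ D}.ncard := by
  rw [← ncard_image_of_injective {a | (a, n) ∈ D} (Prod.mk_left_injective n)]
  congr 1
  ext ⟨a, m⟩
  constructor
  · rintro ⟨ha, rfl⟩
    exact ⟨a, ha, rfl⟩
  · rintro ⟨b, hb, hbm⟩
    obtain ⟨rfl, rfl⟩ := Prod.mk.inj hbm
    exact ⟨hb, rfl⟩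

theorem card_lattice_points_of_dilated_polytope_eventually_polynomial_general
    {Λ E : Type*} [AddCommGroup Λ] [AddCommGroup E] [Module ℝ E] [TopologicalSpace E]
    [ContinuousAdd E] [ContinuousSMul ℝ E] (φ : Λ →+ E) (hφ : Tendsto φ cofinite (cocompact E))
    {V : Set E} (hV : V.Finite) (hVφ : V ⊆ range φ) :
    ∃ (N : ℕ) (p : ℝ[X]), ∀ n : ℕ, N ≤ n →
      ({a : Λ | φ a ∈ (n : ℝ) • convexHull ℝ V}.ncard : ℝ) = p.eval (n : ℝ) := by
  have := hV.to_subtype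
  choose v hv using fun i : V ↦ hVφ i.2
  let w (i : V) : Λ × ℤ := (v i, 1)
  let ψ : Λ × ℤ →+ E × ℝ := φ.prodMap (Int.castAddHom ℝ)
  have hψ : Tendsto ψ cofinite (cocompact (E × ℝ)) := by
    rw [← coprod_cofinite, ← coprod_cocompact]
    exact hφ.prodMap_coprod Int.tendsto_coe_cofinite
  have range_eq : range (ψ ∘ w) = (·, (1 : ℝ)) '' V := by
    rw [image_eq_range]
    exact congrArg range (funext fun i ↦ Prod.ext (hv i) Int.cast_one)
  obtain ⟨p, hp⟩ := eventuallyPolynomial_ncard_degreePart_preimage_hull (R := ℝ) hψ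
    (v := w) (deg := AddMonoidHom.snd Λ ℤ) fun _ ↦ rfl
  obtain ⟨N, hN⟩ := eventually_atTop.1 (hp.and (eventually_gt_atTop 0))
  refine ⟨N, p, fun n hn ↦ ?_⟩
  obtain ⟨hpn, hn_pos⟩ := hN n hn
  beta_reduce at hpn
  rw [← hpn, ncard_degreePart_snd, range_eq]
  congr 2
  ext a
  have hψa : ψ (a, n) = (φ a, (n : ℝ)) := Prod.ext rfl (Int.cast_natCast n)
  rw [mem_ofPred_eq, mem_ofPred_eq, mem_preimage, hψa]
  exact (mem_hull_image_prodMk_one_iff (Nat.cast_pos.2 hn_pos)).symm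

lemma tendsto_intCast_pi_cofinite_cocompact (ι : Type*) [Finite ι] :
    Tendsto ((Int.castAddHom ℝ).compLeft ι) cofinite (cocompact (ι → ℝ)) := by
  rw [← coprodᵢ_cofinite, ← coprodᵢ_cocompact]
  exact Tendsto.pi_map_coprodᵢ fun _ ↦ Int.tendsto_coe_cofinite

/-- Ehrhart–Macdonald, eventual form. Let `P` be a polytope in
`ℝ^k` whose vertices lie in `ℤ^k` (formalized as the convex hull of a nonempty finite
set `V` of points with integer coordinates). Then there exist a constant `N` and a
polynomial `p` such that for all `n ≥ N`, the number of lattice points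
`i(P,n) = |nP ∩ ℤ^k|` equals `p(n)`. -/
theorem card_lattice_points_of_dilated_polytope_eventually_polynomial
    {k : ℕ} (V : Finset (Fin k → ℝ)) (hVne : V.Nonempty)
    (hV : ∀ v ∈ V, ∀ i, ∃ z : ℤ, v i = (z : ℝ)) :
    ∃ (N : ℕ) (p : Polynomial ℝ), ∀ n : ℕ, N ≤ n →
      (({a : Fin k → ℤ |
          (fun i => (a i : ℝ)) ∈ (n : ℝ) • convexHull ℝ (V : Set (Fin k → ℝ))}.ncard : ℝ))
        = p.eval (n : ℝ) := by
  exact card_lattice_points_of_dilated_polytope_eventually_polynomial_general _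
    (tendsto_intCast_pi_cofinite_cocompact (Fin k)) V.finite_toSet fun v hv ↦
      (Classical.skolem.1 (hV v hv)).imp fun _ hz ↦ funext fun i ↦ (hz i).symm
end
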